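/- arXiv:2301.09699 — 3 statements merged into one kernel-verified Lean document; each statement's English description precedes it below -/
import Mathlib

section
/- For every real number x > 0, the series ∑_{n=0}^∞ (-1)^n · C(x,n) · L_n(1) converges and its sum equals 1/Γ(x+1), where Γ is the real Gamma function. -/
/-- The generalized binomial coefficient `C(x, n) = x (x-1) ⋯ (x-n+1) / n!`. -/
noncomputable def genBinom (x : ℝ) (n : ℕ) : ℝ :=
  (∏ i ∈ Finset.range n, (x - i)) / (Nat.factorial n : ℝ)

/-- The value of the `n`-th Laguerre polynomial at `1`:
`L_n(1) = ∑_{k=0}^n C(n,k) (-1)^k / k!`. -/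
noncomputable def laguerreOne (n : ℕ) : ℝ :=
  ∑ k ∈ Finset.range (n + 1), (Nat.choose n k : ℝ) * (-1) ^ k / (Nat.factorial k : ℝ)

/-!
The series is the value at `t = 1` of the Laguerre expansion
`f(t) = ∑ (-1)^n C(x,n) L_n(t)` of `t^x / Γ(x+1)`. Since `t L_n' = n (L_n - L_{n-1})`, its partial
sums satisfy the Euler equation `t S' = x S` up to a single boundary term, which vanishes in the
limit because `C(x,n) = O(n^(-x-1))` and `|L_n(t)| ≤ e^t`. So `f(t) = f(1) t^x`, and comparing
Laplace transforms, `∑ (-1)^n C(x,n) (1 - 1/s)^n / s = s^(-x-1)` against `f(1) Γ(x+1) s^(-x-1)`,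
for `s > 1` gives `f(1)`.
-/

open Filter Topology MeasureTheory Polynomial Set Asymptotics

section GenBinom

theorem genBinom_eq_choose (x : ℝ) (n : ℕ) : genBinom x n = Ring.choose x n := by
  rw [Ring.choose_eq_smul, ← aeval_eq_smeval, aeval_def, ← eval_map, descPochhammer_map,
    descPochhammer_eval_eq_prod_range, genBinom, smul_eq_mul, div_eq_inv_mul]

theorem add_one_mul_genBinom_succ (x : ℝ) (n : ℕ) :
    (n + 1) * genBinom x (n + 1) = (x - n) * genBinom x n := by
  simp only [genBinom, Finset.prod_range_succ, Nat.factorial_succ]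
  push_cast
  field_simp

theorem hasSum_genBinom_mul_pow (x : ℝ) {r : ℝ} (hr : |r| < 1) :
    HasSum (fun n ↦ genBinom x n * r ^ n) ((1 + r) ^ x) := by
  have h := (Real.one_add_rpow_hasFPowerSeriesOnBall_zero (a := x)).hasSum (y := r)
    (by simpa [enorm_eq_nnnorm, ← NNReal.coe_lt_coe] using hr)
  simp only [binomialSeries_apply] at h
  simpa [genBinom_eq_choose] using h

theorem rpow_mul_abs_genBinom_succ_le {x : ℝ} (hx : 0 ≤ x) {n : ℕ} (hn : x ≤ n) :
    ((n + 1 : ℕ) : ℝ) ^ (x + 1) * |genBinom x (n + 1)| ≤ (n : ℝ) ^ (x + 1) * |genBinom x n| := by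
  have hn1 : (0 : ℝ) < n + 1 := by positivity
  have bernoulli : (n - x) / (n + 1) ≤ (n / (n + 1) : ℝ) ^ (x + 1) := by
    calc (n - x) / (n + 1) = 1 + (x + 1) * (-1 / ((n : ℝ) + 1)) := by field_simp; ring
      _ ≤ (1 + -1 / ((n : ℝ) + 1)) ^ (x + 1) :=
          one_add_mul_self_le_rpow_one_add (by rw [le_div_iff₀ hn1]; linarith) (by linarith)
      _ = (n / (n + 1) : ℝ) ^ (x + 1) := by congr 1; field_simp; ring
  have step : |genBinom x (n + 1)| = (n - x) / (n + 1) * |genBinom x n| := by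
    have h := congrArg abs (add_one_mul_genBinom_succ x n)
    rw [abs_mul, abs_mul, abs_of_pos hn1, abs_of_nonpos (sub_nonpos.2 hn), neg_sub] at h
    field_simp
    linarith
  calc ((n + 1 : ℕ) : ℝ) ^ (x + 1) * |genBinom x (n + 1)|
      ≤ (n + 1 : ℝ) ^ (x + 1) * ((n / (n + 1) : ℝ) ^ (x + 1) * |genBinom x n|) := by
        rw [step, Nat.cast_succ]
        gcongr
    _ = (n : ℝ) ^ (x + 1) * |genBinom x n| := by
        rw [Real.div_rpow n.cast_nonneg hn1.le]
        field_simp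

theorem genBinom_isBigO {x : ℝ} (hx : 0 ≤ x) :
    genBinom x =O[atTop] fun n : ℕ ↦ (n : ℝ) ^ (-(x + 1)) := by
  set M := ⌈x⌉₊
  have bound (n : ℕ) (hn : M ≤ n) :
      (n : ℝ) ^ (x + 1) * |genBinom x n| ≤ (M : ℝ) ^ (x + 1) * |genBinom x M| := by
    induction n, hn using Nat.le_induction with
    | base => rfl
    | succ n hn ih => exact (rpow_mul_abs_genBinom_succ_le hx (Nat.ceil_le.1 hn)).trans ih
  refine .of_bound ((M : ℝ) ^ (x + 1) * |genBinom x M|) ?_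
  filter_upwards [eventually_ge_atTop M, eventually_gt_atTop 0] with n hMn hn
  rw [Real.norm_eq_abs, Real.norm_of_nonneg (by positivity), Real.rpow_neg n.cast_nonneg,
    ← div_eq_mul_inv, le_div_iff₀ (by positivity), mul_comm]
  exact bound n hMn

theorem summable_abs_genBinom {x : ℝ} (hx : 0 < x) : Summable fun n ↦ |genBinom x n| :=
  (summable_of_isBigO_nat (Real.summable_nat_rpow.2 (by linarith)) (genBinom_isBigO hx.le)).abs

theorem tendsto_natCast_mul_genBinom {x : ℝ} (hx : 0 < x) :
    Tendsto (fun n : ℕ ↦ n * genBinom x n) atTop (𝓝 0) := by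
  have decay : Tendsto (fun n : ℕ ↦ (n : ℝ) ^ (-x)) atTop (𝓝 0) :=
    (tendsto_rpow_neg_atTop hx).comp tendsto_natCast_atTop_atTop
  refine IsBigO.trans_tendsto ?_ decay
  refine ((isBigO_refl _ _).mul (genBinom_isBigO hx.le)).congr' .rfl ?_
  filter_upwards [eventually_gt_atTop 0] with n hn
  rw [neg_add', Real.rpow_sub_one (by positivity)]
  field_simp

end GenBinom

section Laguerre

/-- The `n`-th Laguerre polynomial `L_n = ∑ C(n,k) (-X)^k / k!`, normalized by `L_n(0) = 1`. -/
noncomputable def laguerre (n : ℕ) : ℝ[X] :=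
  ∑ k ∈ Finset.range (n + 1), monomial k ((n.choose k : ℝ) * (-1) ^ k / (k.factorial : ℝ))

theorem laguerre_zero : laguerre 0 = 1 := by
  simp [laguerre]

theorem eval_laguerre (n : ℕ) (t : ℝ) : (laguerre n).eval t =
    ∑ k ∈ Finset.range (n + 1), (n.choose k : ℝ) * (-1) ^ k / k.factorial * t ^ k := by
  simp only [laguerre, eval_finsetSum, eval_monomial]

theorem eval_one_laguerre (n : ℕ) : (laguerre n).eval 1 = laguerreOne n := by
  simp only [eval_laguerre, laguerreOne, one_pow, mul_one]

theorem coeff_laguerre (n k : ℕ) :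
    (laguerre n).coeff k = (n.choose k : ℝ) * (-1) ^ k / k.factorial := by
  simp only [laguerre, finsetSum_coeff, coeff_monomial, Finset.sum_ite_eq', Finset.mem_range]
  split_ifs with hk
  · rfl
  · rw [Nat.choose_eq_zero_of_lt (by omega)]
    simp

theorem eval_zero_laguerre (n : ℕ) : (laguerre n).eval 0 = 1 := by
  simp [← coeff_zero_eq_eval_zero, coeff_laguerre]

theorem X_mul_derivative_laguerre_succ (n : ℕ) :
    X * derivative (laguerre (n + 1)) = (n + 1 : ℝ[X]) * (laguerre (n + 1) - laguerre n) := by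
  rw [← Nat.cast_succ]
  ext k
  rw [coeff_natCast_mul]
  rcases k with _ | k
  · simp [coeff_laguerre]
  · have absorb : ((n : ℝ) + 1) * n.choose k = (n + 1).choose (k + 1) * (k + 1) := by
      exact_mod_cast Nat.add_one_mul_choose_eq n k
    have pascal : ((n + 1).choose (k + 1) : ℝ) = n.choose k + n.choose (k + 1) := by
      exact_mod_cast Nat.choose_succ_succ n k
    simp only [coeff_X_mul, coeff_derivative, coeff_sub, coeff_laguerre]
    push_cast
    linear_combination ((-1) ^ (k + 1) / ((k + 1).factorial : ℝ)) * (-(n + 1 : ℝ)) * pascal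
      - ((-1) ^ (k + 1) / ((k + 1).factorial : ℝ)) * absorb

theorem coeff_laguerre_succ (n k : ℕ) :
    ((k : ℝ) + 1) ^ 2 * (laguerre n).coeff (k + 1) = (k - n) * (laguerre n).coeff k := by
  have choose_succ : (n.choose (k + 1) : ℝ) * (k + 1) = n.choose k * (n - k) := by
    rcases le_or_gt k n with hk | hk
    · rw [← Nat.cast_sub hk]
      exact_mod_cast Nat.choose_succ_right_eq n k
    · simp [Nat.choose_eq_zero_of_lt hk, Nat.choose_eq_zero_of_lt (hk.trans k.lt_succ_self)]
  simp only [coeff_laguerre, Nat.factorial_succ, pow_succ]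
  push_cast
  field_simp
  linear_combination -choose_succ

theorem laguerre_differential_equation (n : ℕ) :
    X * derivative (derivative (laguerre n)) + (1 - X) * derivative (laguerre n)
      + (n : ℝ[X]) * laguerre n = 0 := by
  ext k
  rcases k with _ | k
  · simp [sub_mul, coeff_derivative, coeff_laguerre]
  · have h := coeff_laguerre_succ n (k + 1)
    simp only [sub_mul, one_mul, coeff_add, coeff_sub, coeff_X_mul, coeff_natCast_mul,
      coeff_derivative, coeff_zero]
    push_cast at h ⊢
    linear_combination h

-- With `S = n L² + t L'²` the differential equation gives `S' = (2t - 1) L'² ≤ 2 S` for `0 ≤ t`.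
theorem antitoneOn_laguerre_energy (n : ℕ) :
    AntitoneOn (fun t ↦ Real.exp (-2 * t) *
      (n * (laguerre n).eval t ^ 2 + t * (derivative (laguerre n)).eval t ^ 2)) (Ici 0) := by
  set L := laguerre n
  have deriv_energy (t : ℝ) : HasDerivAt
      (fun t ↦ Real.exp (-2 * t) * (n * L.eval t ^ 2 + t * (derivative L).eval t ^ 2))
      (-Real.exp (-2 * t) * (2 * n * L.eval t ^ 2 + (derivative L).eval t ^ 2)) t := by
    have ode : t * (derivative (derivative L)).eval t + (1 - t) * (derivative L).eval t
        + n * L.eval t = 0 := by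
      simpa using congrArg (eval t) (laguerre_differential_equation n)
    have hexp : HasDerivAt (fun t : ℝ ↦ Real.exp (-2 * t)) (Real.exp (-2 * t) * -2) t := by
      simpa using ((hasDerivAt_id t).const_mul (-2)).exp
    convert! hexp.mul ((((L.hasDerivAt t).pow 2).const_mul (n : ℝ)).add
      ((hasDerivAt_id t).mul (((derivative L).hasDerivAt t).pow 2))) using 1
    simp only [id_eq, Pi.pow_apply, Pi.add_apply, Pi.mul_apply]
    push_cast
    linear_combination (-2 * Real.exp (-2 * t) * (derivative L).eval t) * ode
  refine antitoneOn_of_hasDerivWithinAt_nonpos (convex_Ici 0)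
    (fun t _ ↦ (deriv_energy t).continuousAt.continuousWithinAt)
    (fun t _ ↦ (deriv_energy t).hasDerivWithinAt) fun t _ ↦ ?_
  exact mul_nonpos_of_nonpos_of_nonneg (neg_nonpos.2 (Real.exp_pos _).le) (by positivity)

theorem abs_eval_laguerre_le (n : ℕ) {t : ℝ} (ht : 0 ≤ t) : |(laguerre n).eval t| ≤ Real.exp t := by
  rcases n.eq_zero_or_pos with rfl | hn
  · simpa [laguerre_zero] using ht
  have energy := antitoneOn_laguerre_energy n self_mem_Ici ht ht
  simp only [eval_zero_laguerre, mul_zero, Real.exp_zero, zero_mul, add_zero, one_pow, mul_one,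
    one_mul] at energy
  have hsq : Real.exp (-2 * t) * (laguerre n).eval t ^ 2 ≤ 1 := by
    refine le_of_mul_le_mul_left ?_ (Nat.cast_pos.2 hn : (0 : ℝ) < n)
    have : 0 ≤ Real.exp (-2 * t) * (t * (derivative (laguerre n)).eval t ^ 2) := by positivity
    linarith
  refine abs_le_of_sq_le_sq ?_ (Real.exp_pos t).le
  rwa [neg_mul, Real.exp_neg, inv_mul_le_one₀ (Real.exp_pos _), two_mul, Real.exp_add, ← sq] at hsq

theorem integral_pow_mul_exp_neg_mul (k : ℕ) {s : ℝ} (hs : 0 < s) :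
    ∫ t in Ioi (0 : ℝ), t ^ k * Real.exp (-(s * t)) = k.factorial * (1 / s) ^ (k + 1) := by
  have h := Real.integral_rpow_mul_exp_neg_mul_Ioi (a := k + 1) (by positivity) hs
  rw [Real.Gamma_nat_eq_factorial, mul_comm] at h
  simp only [add_sub_cancel_right, Real.rpow_natCast] at h
  exact_mod_cast h

theorem integral_laguerre_mul_exp_neg_mul (n : ℕ) {s : ℝ} (hs : 0 < s) :
    ∫ t in Ioi (0 : ℝ), (laguerre n).eval t * Real.exp (-(s * t)) = 1 / s * (1 - 1 / s) ^ n := by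
  have integrable (k : ℕ) : IntegrableOn (fun t : ℝ ↦ t ^ k * Real.exp (-(s * t))) (Ioi 0) := by
    refine .of_integral_ne_zero ?_
    rw [integral_pow_mul_exp_neg_mul k hs]
    positivity
  simp only [eval_laguerre, Finset.sum_mul, mul_assoc]
  rw [integral_finsetSum _ fun k _ ↦ (integrable k).const_mul _]
  simp only [integral_const_mul, integral_pow_mul_exp_neg_mul _ hs]
  rw [show 1 - 1 / s = -(1 / s) + 1 by ring, add_pow, Finset.mul_sum]
  refine Finset.sum_congr rfl fun k _ ↦ ?_
  rw [neg_pow (1 / s), pow_succ, one_pow]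
  field_simp

end Laguerre

section LaguerreSeries

/-- The `N`-th partial sum of the Laguerre expansion of `t ^ x / Γ (x + 1)`, as a polynomial in `t`;
it collects the terms with `n < N`. -/
noncomputable def laguerrePartialSum (x : ℝ) (N : ℕ) : ℝ[X] :=
  ∑ n ∈ Finset.range N, C ((-1) ^ n * genBinom x n) * laguerre n

/-- The sum of the Laguerre expansion of `t ^ x / Γ (x + 1)`, for `0 < x` and `0 < t`. -/
noncomputable def laguerreSeries (x t : ℝ) : ℝ :=
  ∑' n, (-1) ^ n * genBinom x n * (laguerre n).eval t

theorem X_mul_derivative_laguerrePartialSum_succ (x : ℝ) (N : ℕ) :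
    X * derivative (laguerrePartialSum x (N + 1)) = C x * laguerrePartialSum x (N + 1)
      + C ((-1) ^ (N + 1) * ((N + 1) * genBinom x (N + 1))) * laguerre N := by
  induction N with
  | zero => simp [laguerrePartialSum, laguerre_zero, genBinom]
  | succ N ih =>
    have binom := congrArg C (add_one_mul_genBinom_succ x (N + 1))
    rw [laguerrePartialSum, Finset.sum_range_succ, ← laguerrePartialSum, derivative_add,
      derivative_C_mul, mul_add, ih]
    simp only [map_mul, map_add, map_sub, map_pow, map_neg, map_one, map_natCast, pow_succ]
      at binom ⊢
    push_cast at binom ⊢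
    linear_combination (C (genBinom x (N + 1)) * (-1) ^ N * (-1))
      * X_mul_derivative_laguerre_succ N - (-1) ^ N * laguerre (N + 1) * binom

theorem hasDerivAt_rpow_neg_mul_laguerrePartialSum (x : ℝ) (N : ℕ) {t : ℝ} (ht : 0 < t) :
    HasDerivAt (fun t ↦ t ^ (-x) * (laguerrePartialSum x (N + 1)).eval t)
      ((-1) ^ (N + 1) * (((N + 1 : ℕ) : ℝ) * genBinom x (N + 1))
        * ((laguerre N).eval t * t ^ (-x - 1))) t := by
  have euler := congrArg (eval t) (X_mul_derivative_laguerrePartialSum_succ x N)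
  simp only [eval_mul, eval_add, eval_X, eval_C] at euler
  have hpow : t ^ (-x) = t * t ^ (-x - 1) := by
    rw [Real.rpow_sub_one ht.ne']
    field_simp
  convert! (Real.hasDerivAt_rpow_const (Or.inl ht.ne')).mul
    ((laguerrePartialSum x (N + 1)).hasDerivAt t) using 1
  rw [hpow]
  push_cast
  linear_combination -t ^ (-x - 1) * euler

theorem norm_laguerreSeries_term_le (x : ℝ) (n : ℕ) {t : ℝ} (ht : 0 ≤ t) :
    ‖(-1) ^ n * genBinom x n * (laguerre n).eval t‖ ≤ |genBinom x n| * Real.exp t := by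
  simp only [norm_mul, norm_pow, norm_neg, norm_one, one_pow, one_mul, Real.norm_eq_abs]
  gcongr
  exact abs_eval_laguerre_le n ht

variable {x : ℝ}

theorem hasSum_laguerreSeries (hx : 0 < x) {t : ℝ} (ht : 0 ≤ t) :
    HasSum (fun n ↦ (-1) ^ n * genBinom x n * (laguerre n).eval t) (laguerreSeries x t) :=
  (Summable.of_norm_bounded ((summable_abs_genBinom hx).mul_right _)
    fun n ↦ norm_laguerreSeries_term_le x n ht).hasSum

theorem tendsto_eval_laguerrePartialSum (hx : 0 < x) {t : ℝ} (ht : 0 ≤ t) :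
    Tendsto (fun N ↦ (laguerrePartialSum x N).eval t) atTop (𝓝 (laguerreSeries x t)) := by
  simpa only [laguerrePartialSum, eval_finsetSum, eval_mul, eval_C]
    using (hasSum_laguerreSeries hx ht).tendsto_sum_nat

theorem rpow_neg_mul_laguerreSeries_eq (hx : 0 < x) {a b : ℝ} (ha : 0 < a) (hb : 0 < b) :
    a ^ (-x) * laguerreSeries x a = b ^ (-x) * laguerreSeries x b := by
  have pos {t : ℝ} (ht : t ∈ uIcc a b) : 0 < t := (lt_min ha hb).trans_le ht.1
  obtain ⟨M, hM⟩ : ∃ M, ∀ t ∈ uIcc a b, ‖Real.exp t * t ^ (-x - 1)‖ ≤ M :=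
    isCompact_uIcc.exists_bound_of_continuousOn <| Real.continuous_exp.continuousOn.mul <|
      continuousOn_id.rpow_const fun t ht ↦ Or.inl (pos ht).ne'
  set F : ℕ → ℝ → ℝ := fun N t ↦ t ^ (-x) * (laguerrePartialSum x (N + 1)).eval t
  have F_tendsto {t : ℝ} (ht : 0 < t) :
      Tendsto (F · t) atTop (𝓝 (t ^ (-x) * laguerreSeries x t)) :=
    ((tendsto_eval_laguerrePartialSum hx ht.le).comp (tendsto_add_atTop_nat 1)).const_mul _
  have mean_value (N : ℕ) :
      ‖F N a - F N b‖ ≤ |((N + 1 : ℕ) : ℝ) * genBinom x (N + 1)| * M * ‖a - b‖ := by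
    refine (convex_uIcc a b).norm_image_sub_le_of_norm_hasDerivWithin_le (fun t ht ↦
      (hasDerivAt_rpow_neg_mul_laguerrePartialSum x N (pos ht)).hasDerivWithinAt)
      (fun t ht ↦ ?_) right_mem_uIcc left_mem_uIcc
    have bound : ‖(laguerre N).eval t * t ^ (-x - 1)‖ ≤ M := by
      refine le_trans ?_ (hM t ht)
      rw [norm_mul, norm_mul, Real.norm_of_nonneg (Real.exp_pos t).le]
      gcongr
      exact abs_eval_laguerre_le N (pos ht).le
    rw [norm_mul, norm_mul, norm_pow, norm_neg, norm_one, one_pow, one_mul, Real.norm_eq_abs]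
    gcongr
  have boundary : Tendsto
      (fun N : ℕ ↦ |((N + 1 : ℕ) : ℝ) * genBinom x (N + 1)| * M * ‖a - b‖) atTop (𝓝 0) := by
    simpa using (((tendsto_natCast_mul_genBinom hx).comp (tendsto_add_atTop_nat 1)).abs.mul_const
      M).mul_const ‖a - b‖
  exact sub_eq_zero.1 <| tendsto_nhds_unique ((F_tendsto ha).sub (F_tendsto hb))
    (squeeze_zero_norm mean_value boundary)

theorem laguerreSeries_eq_mul_rpow (hx : 0 < x) {t : ℝ} (ht : 0 < t) :
    laguerreSeries x t = laguerreSeries x 1 * t ^ x := by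
  have h := rpow_neg_mul_laguerreSeries_eq hx ht one_pos
  rw [Real.one_rpow, one_mul, Real.rpow_neg ht.le] at h
  rw [← h]
  field_simp

theorem integral_laguerreSeries_mul_exp_neg_mul (hx : 0 < x) {s : ℝ} (hs : 1 < s) :
    ∫ t in Ioi (0 : ℝ), laguerreSeries x t * Real.exp (-(s * t)) = (1 / s) ^ (x + 1) := by
  have hs0 : 0 < s := one_pos.trans hs
  have termwise : HasSum
      (fun n ↦ ∫ t in Ioi (0 : ℝ),
        (-1) ^ n * genBinom x n * (laguerre n).eval t * Real.exp (-(s * t)))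
      (∫ t in Ioi (0 : ℝ), laguerreSeries x t * Real.exp (-(s * t))) := by
    refine hasSum_integral_of_dominated_convergence
      (fun n t ↦ |genBinom x n| * Real.exp (-(s - 1) * t)) (fun n ↦ ?_) (fun n ↦ ?_)
      (.of_forall fun t ↦ (summable_abs_genBinom hx).mul_right _) ?_ ?_
    · exact Continuous.aestronglyMeasurable (by fun_prop)
    · filter_upwards [ae_restrict_mem measurableSet_Ioi] with t ht
      rw [norm_mul, Real.norm_of_nonneg (Real.exp_pos _).le,
        show -(s - 1) * t = t + -(s * t) by ring, Real.exp_add, ← mul_assoc]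
      gcongr
      exact norm_laguerreSeries_term_le x n (mem_Ioi.1 ht).le
    · simp only [tsum_mul_right]
      exact (exp_neg_integrableOn_Ioi 0 (sub_pos.2 hs)).const_mul _
    · filter_upwards [ae_restrict_mem measurableSet_Ioi] with t ht
      exact (hasSum_laguerreSeries hx (mem_Ioi.1 ht).le).mul_right _
  have ratio_lt : |-(1 - 1 / s)| < 1 := by
    have : 1 / s < 1 := (div_lt_one hs0).2 hs
    rw [abs_neg, abs_of_pos (by linarith)]
    linarith [one_div_pos.2 hs0]
  have binomial := (hasSum_genBinom_mul_pow x ratio_lt).mul_left (1 / s)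
  rw [show 1 + -(1 - 1 / s) = 1 / s by ring, mul_comm, ← Real.rpow_add_one (by positivity)]
    at binomial
  refine termwise.unique (binomial.congr_fun fun n ↦ ?_)
  simp only [mul_assoc, integral_const_mul]
  rw [integral_laguerre_mul_exp_neg_mul n hs0, neg_pow (1 - 1 / s)]
  ring

theorem laguerreSeries_one (hx : 0 < x) : laguerreSeries x 1 = 1 / Real.Gamma (x + 1) := by
  have hΓ : 0 < Real.Gamma (x + 1) := Real.Gamma_pos_of_pos (by linarith)
  have laplace : laguerreSeries x 1 * ((1 / 2) ^ (x + 1) * Real.Gamma (x + 1))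
      = (1 / 2) ^ (x + 1) := by
    rw [← Real.integral_rpow_mul_exp_neg_mul_Ioi (by linarith) two_pos,
      ← integral_laguerreSeries_mul_exp_neg_mul hx one_lt_two, ← integral_const_mul]
    refine Eq.symm <| setIntegral_congr_fun measurableSet_Ioi fun t ht ↦ ?_
    simp only [laguerreSeries_eq_mul_rpow hx ht, add_sub_cancel_right, mul_assoc]
  rw [eq_div_iff hΓ.ne']
  refine mul_left_cancel₀ (by positivity : ((1 : ℝ) / 2) ^ (x + 1) ≠ 0) ?_
  linear_combination laplace

end LaguerreSeries

theorem reciprocal_gamma_newton_series_general {x t : ℝ} (hx : 0 < x) (ht : 0 < t) :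
    HasSum (fun n ↦ (-1) ^ n * genBinom x n * (laguerre n).eval t)
      (t ^ x / Real.Gamma (x + 1)) := by
  rw [div_eq_mul_one_div, mul_comm, ← laguerreSeries_one hx, ← laguerreSeries_eq_mul_rpow hx ht]
  exact hasSum_laguerreSeries hx ht.le

theorem reciprocal_gamma_newton_series (x : ℝ) (hx : 0 < x) :
    Filter.Tendsto
      (fun N => ∑ n ∈ Finset.range N, (-1) ^ n * genBinom x n * laguerreOne n)
      Filter.atTop (nhds (1 / Real.Gamma (x + 1))) := by
  simpa only [eval_one_laguerre, Real.one_rpow]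
    using (reciprocal_gamma_newton_series_general hx one_pos).tendsto_sum_nat
end

section
/- For every real number x > 0, the sequence of partial products P_N = ∏_{n=1}^N ∏_{k=1}^n (k!)^{(-1)^{k+n} · C(x,n) · C(n,k)} converges as N → ∞, and (1/x) · lim_{N→∞} P_N = Γ(x), where Γ is the real Gamma function and the exponentiation is the real power (k!)^t = exp(t·ln(k!)). -/
/-!
The logarithm of the product is a partial sum of the Newton series
`∑ C(x, n) Δⁿ(log Γ)(1)` of `log Γ(1 + x)`, so the task is to show that the remainder `R` of that
series tends to `0`. The remainder of `y ↦ 1 / y` at `a` is explicit,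
`(-1)^N N! C(x, N) / (a (a + 1) ⋯ (a + N - 1) (a + x))`. As `R` commutes with differentiation and
with `Δ`, and `log' y = 1 / y`, `Δ (log Γ) = log`, this controls first `Δ (R log)` and then
`Δ (R (log Γ)) = R log`. Both `R log` and `R (log Γ)` vanish at infinity, because `R` annihilates
affine functions, and the bounds telescope since reciprocals of rising factorials are
differences of one another. The outcome is `|R (log Γ)(1)| = O(|C(x, N)|)`, which tends to `0` for
`x > -1`.
-/

open Filter
open scoped Nat Topology fwdDiff
open Finset (range Icc)
open Set (Ioi)

section GenBinom

theorem genBinom_zero (x : ℝ) : genBinom x 0 = 1 := by simp [genBinom]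

theorem genBinom_one (x : ℝ) : genBinom x 1 = x := by simp [genBinom]

theorem genBinom_succ (x : ℝ) (n : ℕ) :
    genBinom x (n + 1) = genBinom x n * ((x - n) / (n + 1)) := by
  rw [genBinom, genBinom, Finset.prod_range_succ, Nat.factorial_succ, Nat.cast_mul, Nat.cast_succ,
    mul_comm (n + 1 : ℝ), mul_div_mul_comm]

theorem abs_genBinom_succ_le {x : ℝ} {n : ℕ} (hn : x ≤ n) :
    |genBinom x (n + 1)| ≤ |genBinom x n| * Real.exp (-((x + 1) * (1 / (n + 1)))) := by
  have hfactor : |(x - n) / (n + 1)| = 1 - (x + 1) * (1 / (n + 1)) := by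
    rw [abs_div, abs_of_nonpos (by linarith), abs_of_pos (by positivity : (0 : ℝ) < n + 1)]
    field_simp
    ring
  rw [genBinom_succ, abs_mul, hfactor]
  exact mul_le_mul_of_nonneg_left (Real.one_sub_le_exp_neg _) (abs_nonneg _)

theorem tendsto_genBinom_zero {x : ℝ} (hx : -1 < x) : Tendsto (genBinom x) atTop (𝓝 0) := by
  let H (n : ℕ) : ℝ := ∑ i ∈ range n, 1 / ((i : ℝ) + 1)
  obtain ⟨M, hM⟩ := exists_nat_ge x
  have hbound (n : ℕ) (hn : M ≤ n) :
      |genBinom x n| ≤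
        |genBinom x M| * Real.exp ((x + 1) * H M) * Real.exp (-((x + 1) * H n)) := by
    induction n, hn using Nat.le_induction with
    | base => rw [mul_assoc, ← Real.exp_add, add_neg_cancel, Real.exp_zero, mul_one]
    | succ n hn ih =>
      have hxn : x ≤ n := hM.trans (by exact_mod_cast hn)
      have hH : H (n + 1) = H n + 1 / (n + 1) := Finset.sum_range_succ _ _
      rw [hH, mul_add, neg_add, Real.exp_add, ← mul_assoc]
      exact (abs_genBinom_succ_le hxn).trans (by gcongr)
  have hdecay : Tendsto (fun n ↦ Real.exp (-((x + 1) * H n))) atTop (𝓝 0) :=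
    Real.tendsto_exp_neg_atTop_nhds_zero.comp <|
      Real.tendsto_sum_range_one_div_nat_succ_atTop.const_mul_atTop (by linarith)
  refine squeeze_zero_norm' (eventually_atTop.2 ⟨M, hbound⟩) ?_
  simpa only [mul_zero] using hdecay.const_mul (|genBinom x M| * Real.exp ((x + 1) * H M))

end GenBinom

section RisingFactorial

theorem ascPochhammer_succ_eval_left {S : Type*} [CommSemiring S] (n : ℕ) (a : S) :
    (ascPochhammer S (n + 1)).eval a = a * (ascPochhammer S n).eval (a + 1) := by
  simp [ascPochhammer_succ_left]

variable {K : Type*} [Field K] [LinearOrder K] [IsStrictOrderedRing K]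

theorem monotoneOn_ascPochhammer_eval (n : ℕ) :
    MonotoneOn (fun a ↦ (ascPochhammer K n).eval a) (Ioi 0) := by
  intro a ha b hb hab
  induction n with
  | zero => simp
  | succ n ih =>
    simp only [Set.mem_Ioi] at ha hb
    have := ascPochhammer_pos n b hb
    simp only [ascPochhammer_succ_eval]
    gcongr

theorem fwdDiff_inv_ascPochhammer_eval {a : K} (n : ℕ) (ha : 0 < a) :
    Δ_[1] (fun y ↦ ((ascPochhammer K n).eval y)⁻¹) a =
      -(n * ((ascPochhammer K (n + 1)).eval a)⁻¹) := by
  have hpos := ascPochhammer_pos n a ha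
  have hpos' := ascPochhammer_pos n (a + 1) (by positivity)
  have hleft := ascPochhammer_succ_eval_left n a
  rw [ascPochhammer_succ_eval] at hleft ⊢
  rw [fwdDiff]
  field_simp
  linear_combination hleft

theorem fwdDiff_iter_inv {a : K} (n : ℕ) (ha : 0 < a) :
    (Δ_[1])^[n] (fun y : K ↦ y⁻¹) a = (-1) ^ n * n ! * ((ascPochhammer K (n + 1)).eval a)⁻¹ := by
  induction n generalizing a with
  | zero => simp
  | succ n ih =>
    have hstep := fwdDiff_inv_ascPochhammer_eval (n + 1) ha
    rw [fwdDiff] at hstep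
    rw [Function.iterate_succ_apply', fwdDiff, ih ha, ih (by positivity), Nat.factorial_succ]
    push_cast at hstep ⊢
    linear_combination (-1) ^ n * (n ! : K) * hstep

end RisingFactorial

theorem norm_le_of_norm_fwdDiff_le_neg_fwdDiff {E : Type*} [SeminormedAddCommGroup E]
    {v : ℝ → E} {u : ℝ → ℝ} {a : ℝ}
    (hv : Tendsto (fun k : ℕ ↦ v (a + k)) atTop (𝓝 0)) (hu : ∀ b ≥ a, 0 ≤ u b)
    (hvu : ∀ b ≥ a, ‖Δ_[1] v b‖ ≤ -Δ_[1] u b) : ‖v a‖ ≤ u a := by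
  have hpartial (k : ℕ) : ‖v a - v (a + k)‖ ≤ u a := calc
    ‖v a - v (a + k)‖ ≤ ∑ i ∈ range k, ‖v (a + i) - v (a + (i + 1 : ℕ))‖ := by
      simpa [dist_eq_norm] using dist_le_range_sum_dist (fun i : ℕ ↦ v (a + i)) k
    _ ≤ ∑ i ∈ range k, (u (a + i) - u (a + (i + 1 : ℕ))) := by
      refine Finset.sum_le_sum fun i _ ↦ ?_
      have := hvu (a + i) (by simp)
      rwa [fwdDiff, fwdDiff, neg_sub, norm_sub_rev, add_assoc, ← Nat.cast_succ] at this
    _ = u a - u (a + k) := by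
      simpa using Finset.sum_range_sub' (fun i : ℕ ↦ u (a + i)) k
    _ ≤ u a := sub_le_self _ (hu _ (by simp))
  have hlim : Tendsto (fun k : ℕ ↦ ‖v a - v (a + k)‖) atTop (𝓝 ‖v a‖) := by
    simpa only [sub_zero] using (hv.const_sub (v a)).norm
  exact le_of_tendsto' hlim hpartial

theorem abs_le_of_abs_fwdDiff_le_inv_ascPochhammer {v : ℝ → ℝ} {K a : ℝ} (n : ℕ) (ha : 0 < a)
    (hv : Tendsto (fun k : ℕ ↦ v (a + k)) atTop (𝓝 0))
    (hbound : ∀ b ≥ a, |Δ_[1] v b| ≤ K * ((ascPochhammer ℝ (n + 2)).eval b)⁻¹) :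
    |v a| ≤ K / (n + 1) * ((ascPochhammer ℝ (n + 1)).eval a)⁻¹ := by
  have hK : 0 ≤ K := nonneg_of_mul_nonneg_left ((abs_nonneg _).trans (hbound a le_rfl))
    (inv_pos.2 (ascPochhammer_pos _ a ha))
  refine norm_le_of_norm_fwdDiff_le_neg_fwdDiff
    (u := (K / (n + 1)) • fun b ↦ ((ascPochhammer ℝ (n + 1)).eval b)⁻¹) hv ?_ ?_
  · intro b hb
    have := ascPochhammer_pos (n + 1) b (ha.trans_le hb)
    exact mul_nonneg (by positivity) (by positivity)
  · intro b hb
    refine (hbound b hb).trans_eq ?_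
    rw [fwdDiff_const_smul, Pi.smul_apply, smul_eq_mul,
      fwdDiff_inv_ascPochhammer_eval (n + 1) (ha.trans_le hb)]
    push_cast
    field_simp

section NewtonRemainder

/-- The error at `a + x` of the first `N` terms of the Newton series of `f` based at `a`. It depends
only on the values of `f` at `a + x` and at `a, a + 1, …, a + N - 1`. -/
noncomputable def newtonRemainder (x : ℝ) (N : ℕ) (f : ℝ → ℝ) (a : ℝ) : ℝ :=
  f (a + x) - ∑ n ∈ range N, genBinom x n * (Δ_[1])^[n] f a

variable {x a : ℝ} {f g : ℝ → ℝ}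

theorem newtonRemainder_succ (x : ℝ) (N : ℕ) (f : ℝ → ℝ) (a : ℝ) :
    newtonRemainder x (N + 1) f a =
      newtonRemainder x N f a - genBinom x N * (Δ_[1])^[N] f a := by
  rw [newtonRemainder, newtonRemainder, Finset.sum_range_succ, sub_add_eq_sub_sub]

theorem newtonRemainder_sub (x : ℝ) (N : ℕ) (f g : ℝ → ℝ) (a : ℝ) :
    newtonRemainder x N (f - g) a = newtonRemainder x N f a - newtonRemainder x N g a := by
  simp only [newtonRemainder, fwdDiff_iter_eq_sum_shift, Pi.sub_apply, smul_sub,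
    Finset.sum_sub_distrib, mul_sub]
  ring

theorem newtonRemainder_comp_add (x : ℝ) (N : ℕ) (f : ℝ → ℝ) (c a : ℝ) :
    newtonRemainder x N (fun y ↦ f (y + c)) a = newtonRemainder x N f (a + c) := by
  simp only [newtonRemainder, fwdDiff_iter_comp_add, add_right_comm]

theorem fwdDiff_newtonRemainder (x : ℝ) (N : ℕ) (f : ℝ → ℝ) (a : ℝ) :
    Δ_[1] (newtonRemainder x N f) a = newtonRemainder x N (Δ_[1] f) a := by
  rw [fwdDiff, ← newtonRemainder_comp_add, ← newtonRemainder_sub]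
  rfl

theorem newtonRemainder_affine (x : ℝ) (N : ℕ) (A B a : ℝ) :
    newtonRemainder x (N + 2) (fun y ↦ A + B * y) a = 0 := by
  have hfirst : Δ_[1] (fun y ↦ A + B * y) = fun _ ↦ B := by
    ext y
    rw [fwdDiff]
    ring
  have hvanish (n : ℕ) : (Δ_[1])^[n] (fun _ : ℝ ↦ (0 : ℝ)) = fun _ ↦ 0 :=
    Function.iterate_fixed (fwdDiff_const _ _) n
  simp only [newtonRemainder, Finset.sum_range_succ', Function.iterate_succ_apply, hfirst,
    fwdDiff_const, hvanish, Function.iterate_zero_apply, genBinom_zero, zero_add,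
    genBinom_one, mul_zero, Finset.sum_const_zero]
  ring

theorem newtonRemainder_congr (N : ℕ) (hfg : Set.EqOn f g (Ioi 0)) (ha : 0 < a) (hax : 0 < a + x) :
    newtonRemainder x N f a = newtonRemainder x N g a := by
  have hnode (k : ℕ) : f (a + k • 1) = g (a + k • 1) := hfg (Set.mem_Ioi.2 (by positivity))
  simp only [newtonRemainder, fwdDiff_iter_eq_sum_shift, hfg hax, hnode]

theorem tendsto_newtonRemainder {ι : Type*} {l : Filter ι} {F : ι → ℝ → ℝ} (N : ℕ)
    (hF : ∀ y > 0, Tendsto (F · y) l (𝓝 (f y))) (ha : 0 < a) (hax : 0 < a + x) :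
    Tendsto (fun i ↦ newtonRemainder x N (F i) a) l (𝓝 (newtonRemainder x N f a)) := by
  simp only [newtonRemainder, fwdDiff_iter_eq_sum_shift]
  refine (hF _ hax).sub <| tendsto_finsetSum _ fun n _ ↦ .const_mul _ <|
    tendsto_finsetSum _ fun k _ ↦ ?_
  exact (hF _ (by positivity)).const_smul _

theorem hasDerivAt_newtonRemainder {f' : ℝ → ℝ} (N : ℕ) (hf : ∀ y > 0, HasDerivAt f (f' y) y)
    (ha : 0 < a) (hax : 0 < a + x) :
    HasDerivAt (newtonRemainder x N f) (newtonRemainder x N f' a) a := by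
  unfold newtonRemainder
  simp only [fwdDiff_iter_eq_sum_shift, zsmul_eq_mul]
  refine ((hf _ hax).comp_add_const _ _).sub <| .fun_sum fun n _ ↦ .const_mul _ <|
    .fun_sum fun k _ ↦ ?_
  exact ((hf _ (by positivity)).comp_add_const _ _).const_mul _

theorem tendsto_newtonRemainder_zero_of_asymptotically_affine {ι : Type*} {l : Filter ι}
    {A B c : ι → ℝ} (N : ℕ)
    (hf : ∀ y > 0, Tendsto (fun i ↦ f (y + c i) - (A i + B i * y)) l (𝓝 0))
    (ha : 0 < a) (hax : 0 < a + x) :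
    Tendsto (fun i ↦ newtonRemainder x (N + 2) f (a + c i)) l (𝓝 0) := by
  have hzero : newtonRemainder x (N + 2) (fun _ ↦ 0) a = 0 := by
    simpa using newtonRemainder_affine x N 0 0 a
  rw [← hzero]
  refine (tendsto_newtonRemainder (N + 2) hf ha hax).congr fun i ↦ ?_
  have := newtonRemainder_sub x (N + 2) (fun y ↦ f (y + c i)) (fun y ↦ A i + B i * y) a
  rwa [newtonRemainder_affine, sub_zero, newtonRemainder_comp_add] at this

theorem newtonRemainder_inv (N : ℕ) (ha : 0 < a) (hax : 0 < a + x) :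
    newtonRemainder x N (fun y ↦ y⁻¹) a =
      (-1) ^ N * (N ! * genBinom x N) * ((ascPochhammer ℝ N).eval a)⁻¹ / (a + x) := by
  induction N with
  | zero => simp [newtonRemainder, genBinom_zero]
  | succ N ih =>
    have hpos := ascPochhammer_pos N a ha
    rw [newtonRemainder_succ, ih, fwdDiff_iter_inv N ha, ascPochhammer_succ_eval, genBinom_succ,
      Nat.factorial_succ]
    push_cast
    field_simp
    ring

theorem abs_newtonRemainder_inv_le (N : ℕ) (hx : -1 < x) (ha : 1 ≤ a) :
    |newtonRemainder x N (fun y ↦ y⁻¹) a| ≤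
      N ! * |genBinom x N| / (1 + x) * ((ascPochhammer ℝ N).eval a)⁻¹ := by
  have hpos := ascPochhammer_pos N a (by linarith)
  rw [newtonRemainder_inv N (by linarith) (by linarith), abs_div, abs_mul, abs_mul, abs_mul,
    abs_pow, abs_neg, abs_one, one_pow, one_mul, Nat.abs_cast, abs_of_pos (inv_pos.2 hpos),
    abs_of_pos (by linarith : 0 < a + x), div_mul_eq_mul_div]
  have : 0 < 1 + x := by linarith
  gcongr

theorem abs_fwdDiff_newtonRemainder_log_le (N : ℕ) (hx : -1 < x) (ha : 1 ≤ a) :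
    |Δ_[1] (newtonRemainder x N Real.log) a| ≤
      N ! * |genBinom x N| / (1 + x) * ((ascPochhammer ℝ N).eval a)⁻¹ := by
  have hderiv (b : ℝ) (hb : b ∈ Set.Icc a (a + 1)) :
      HasDerivWithinAt (newtonRemainder x N Real.log) (newtonRemainder x N (fun y ↦ y⁻¹) b)
        (Set.Icc a (a + 1)) b :=
    (hasDerivAt_newtonRemainder N (fun y hy ↦ Real.hasDerivAt_log hy.ne') (by linarith [hb.1])
      (by linarith [hb.1])).hasDerivWithinAt
  have hbound (b : ℝ) (hb : b ∈ Set.Icc a (a + 1)) :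
      ‖newtonRemainder x N (fun y ↦ y⁻¹) b‖ ≤
        N ! * |genBinom x N| / (1 + x) * ((ascPochhammer ℝ N).eval a)⁻¹ := by
    refine (abs_newtonRemainder_inv_le N hx (ha.trans hb.1)).trans ?_
    have hpos := ascPochhammer_pos N a (by linarith)
    have hmono := monotoneOn_ascPochhammer_eval N (Set.mem_Ioi.2 (by linarith : 0 < a))
      (Set.mem_Ioi.2 (by linarith [hb.1])) hb.1
    dsimp only at hmono
    have : 0 < 1 + x := by linarith
    gcongr
  simpa [fwdDiff] using
    (convex_Icc a (a + 1)).norm_image_sub_le_of_norm_hasDerivWithin_le hderiv hbound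
      (by simp : a ∈ _) (by simp : a + 1 ∈ _)

theorem abs_newtonRemainder_log_le (N : ℕ) (hx : -1 < x) (ha : 1 ≤ a) :
    |newtonRemainder x (N + 2) Real.log a| ≤
      (N + 2)! * |genBinom x (N + 2)| / (1 + x) / (N + 1) *
        ((ascPochhammer ℝ (N + 1)).eval a)⁻¹ := by
  refine abs_le_of_abs_fwdDiff_le_inv_ascPochhammer N (by linarith) ?_ fun b hb ↦
    abs_fwdDiff_newtonRemainder_log_le (N + 2) hx (ha.trans hb)
  refine tendsto_newtonRemainder_zero_of_asymptotically_affine (A := fun k : ℕ ↦ Real.log k)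
    (B := 0) N ?_ (by linarith) (by linarith)
  intro y _
  simpa [add_comm y] using!
    (Real.tendsto_log_comp_add_sub_log y).comp tendsto_natCast_atTop_atTop

end NewtonRemainder

section LogGamma

variable {x a y : ℝ}

theorem log_Gamma_add_one (hy : 0 < y) :
    Real.log (Real.Gamma (y + 1)) = Real.log (Real.Gamma y) + Real.log y := by
  rw [Real.Gamma_add_one hy.ne', Real.log_mul hy.ne' (Real.Gamma_pos_of_pos hy).ne', add_comm]

theorem eqOn_fwdDiff_log_Gamma : Set.EqOn (Δ_[1] (Real.log ∘ Real.Gamma)) Real.log (Ioi 0) :=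
  fun _ hy ↦ sub_eq_of_eq_add' (log_Gamma_add_one hy)

theorem tendsto_log_Gamma_add_natCast_succ (hy : 0 < y) :
    Tendsto (fun n : ℕ ↦ Real.log (Real.Gamma (y + (n + 1 : ℕ))) -
      (Real.log n ! + Real.log n * y)) atTop (𝓝 0) := by
  have hlim := (Real.BohrMollerup.tendsto_log_gamma hy).const_sub (Real.log (Real.Gamma y))
  rw [sub_self] at hlim
  refine hlim.congr fun n ↦ ?_
  rw [Real.BohrMollerup.logGammaSeq,
    Real.BohrMollerup.f_add_nat_eq (f := fun y ↦ Real.log (Real.Gamma y)) log_Gamma_add_one hy]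
  ring

theorem abs_newtonRemainder_log_Gamma_le (N : ℕ) (hx : -1 < x) (ha : 1 ≤ a) :
    |newtonRemainder x (N + 3) (Real.log ∘ Real.Gamma) a| ≤
      (N + 3)! * |genBinom x (N + 3)| / (1 + x) / (N + 2) / (N + 1) *
        ((ascPochhammer ℝ (N + 1)).eval a)⁻¹ := by
  refine abs_le_of_abs_fwdDiff_le_inv_ascPochhammer N (by linarith) ?_ fun b hb ↦ ?_
  · exact (tendsto_add_atTop_iff_nat 1).1 <|
      tendsto_newtonRemainder_zero_of_asymptotically_affine (N + 1)
        (fun y hy ↦ tendsto_log_Gamma_add_natCast_succ hy) (by linarith) (by linarith)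
  · rw [fwdDiff_newtonRemainder, newtonRemainder_congr (N + 3) eqOn_fwdDiff_log_Gamma
      (by linarith) (by linarith)]
    have hlog := abs_newtonRemainder_log_le (N + 1) hx (ha.trans hb)
    rwa [Nat.cast_succ, add_assoc (N : ℝ), one_add_one_eq_two] at hlog

theorem abs_newtonRemainder_log_Gamma_one_le (N : ℕ) (hx : -1 < x) :
    |newtonRemainder x (N + 3) (Real.log ∘ Real.Gamma) 1| ≤
      3 / (1 + x) * |genBinom x (N + 3)| := by
  have hx' : 0 < 1 + x := by linarith
  refine (abs_newtonRemainder_log_Gamma_le N hx le_rfl).trans ?_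
  rw [ascPochhammer_eval_one, Nat.factorial_succ (N + 2), Nat.factorial_succ (N + 1)]
  push_cast
  calc
    _ = (N + 3) / (N + 1) / (1 + x) * |genBinom x (N + 3)| := by
      field_simp
      ring
    _ ≤ 3 / (1 + x) * |genBinom x (N + 3)| := by
      gcongr
      rw [div_le_iff₀ (by positivity)]
      linarith [(Nat.cast_nonneg N : (0 : ℝ) ≤ N)]

theorem tendsto_newtonSeries_log_Gamma (hx : -1 < x) :
    Tendsto (fun N ↦ ∑ n ∈ range N, genBinom x n * (Δ_[1])^[n] (Real.log ∘ Real.Gamma) 1) atTop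
      (𝓝 (Real.log (Real.Gamma (x + 1)))) := by
  have hsmall : Tendsto (fun N ↦ newtonRemainder x N (Real.log ∘ Real.Gamma) 1) atTop (𝓝 0) := by
    rw [← tendsto_add_atTop_iff_nat 3]
    have hbinom := ((tendsto_add_atTop_iff_nat 3).2 (tendsto_genBinom_zero hx)).abs
    refine squeeze_zero_norm (fun N ↦ abs_newtonRemainder_log_Gamma_one_le N hx) ?_
    simpa only [abs_zero, mul_zero] using hbinom.const_mul (3 / (1 + x))
  simpa [newtonRemainder, add_comm] using
    hsmall.const_sub (Real.log (Real.Gamma (x + 1)))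

theorem fwdDiff_iter_log_Gamma_one (n : ℕ) :
    (Δ_[1])^[n] (Real.log ∘ Real.Gamma) 1 =
      ∑ k ∈ Icc 1 n, (-1 : ℝ) ^ (k + n) * n.choose k * Real.log k ! := by
  have hfirst : (Real.log ∘ Real.Gamma) (1 + 0 • 1) = 0 := by simp
  rw [fwdDiff_iter_eq_sum_shift, Finset.sum_range_eq_add_Ico _ n.add_one_pos, hfirst, smul_zero,
    zero_add, Finset.Ico_add_one_right_eq_Icc]
  refine Finset.sum_congr rfl fun k hk ↦ ?_
  have hsign : (-1 : ℝ) ^ (n - k) = (-1) ^ (k + n) := by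
    have hexponent : k + n = 2 * k + (n - k) := by grind
    rw [hexponent, pow_add, pow_mul, neg_one_sq, one_pow, one_mul]
  rw [Function.comp_apply, nsmul_one, add_comm (1 : ℝ), Real.Gamma_nat_eq_factorial, ← hsign,
    zsmul_eq_mul]
  push_cast
  rfl

theorem prod_factorial_rpow_eq_exp (x : ℝ) (n : ℕ) :
    ∏ k ∈ Icc 1 n, (k ! : ℝ) ^ ((-1 : ℝ) ^ (k + n) * genBinom x n * (n.choose k : ℝ)) =
      Real.exp (genBinom x n * (Δ_[1])^[n] (Real.log ∘ Real.Gamma) 1) := by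
  rw [fwdDiff_iter_log_Gamma_one, Finset.mul_sum, Real.exp_sum]
  refine Finset.prod_congr rfl fun k _ ↦ ?_
  rw [Real.rpow_def_of_pos (by positivity)]
  ring_nf

end LogGamma

theorem gamma_product_representation_general (x : ℝ) (hx : -1 < x) :
    Tendsto
      (fun N ↦ ∏ n ∈ Icc 1 N, ∏ k ∈ Icc 1 n,
        (k ! : ℝ) ^ ((-1 : ℝ) ^ (k + n) * genBinom x n * (n.choose k : ℝ)))
      atTop (𝓝 (Real.Gamma (x + 1))) := by
  have hexp := (tendsto_newtonSeries_log_Gamma hx).rexp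
  rw [Real.exp_log (Real.Gamma_pos_of_pos (by linarith))] at hexp
  refine ((tendsto_add_atTop_iff_nat 1).2 hexp).congr fun N ↦ ?_
  rw [Finset.sum_range_eq_add_Ico _ N.add_one_pos, Finset.Ico_add_one_right_eq_Icc]
  simp [prod_factorial_rpow_eq_exp, ← Real.exp_sum]

theorem gamma_product_representation (x : ℝ) (hx : 0 < x) :
    ∃ P : ℝ,
      Filter.Tendsto
        (fun N => ∏ n ∈ Finset.Icc 1 N, ∏ k ∈ Finset.Icc 1 n,
          (Nat.factorial k : ℝ) ^ ((-1 : ℝ) ^ (k + n) * genBinom x n * (Nat.choose n k : ℝ)))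
        Filter.atTop (nhds P) ∧
      (1 / x) * P = Real.Gamma x := by
  refine ⟨_, gamma_product_representation_general x (by linarith), ?_⟩
  rw [Real.Gamma_add_one hx.ne', one_div, inv_mul_cancel_left₀ hx.ne']
end

section
/- For every positive integer N, ln(N!) = ∑_{n=1}^N ∑_{k=1}^n [(-1)^{n+k} · (2k-1) / ((n-k)! · (k+n-1)! · (2n-1))] · [(N+n-1)! / (N-n)!] · ln k. -/
/-!
Only the identity `∑ n ∈ [k, N], a N n k = 1` for the coefficients `a N n k` matters: exchanging the
two sums then gives `∑ k ∈ [1, N], f k` for any `f`, and `f = log` yields `log N!`.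
With `c = 2 k - 1`, `d = N - k` and `j = n - k` the identity reads
`∑ j ≤ d, (-1) ^ j * C(d, j) * C(c + d + j, d) * c / (c + 2 j) = 1`.
Passing from `d` to `d + 1` cancels the factor `c + 2 j` and changes the sum by a multiple of
`∑ j ≤ d + 1, (-1) ^ j * C(d + 1, j) * C(c + d + j, d)`, the `(d + 1)`-st finite difference of a
polynomial of degree `d`, which vanishes.
-/

open Finset

open scoped Nat

theorem fwdDiff_iter_choose_eq_zero_of_lt {m n : ℕ} (h : m < n) :
    (fwdDiff 1)^[n] (fun x ↦ x.choose m : ℕ → ℤ) = 0 := by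
  obtain ⟨i, rfl⟩ := Nat.exists_eq_add_of_lt h
  have iterate_m : (fwdDiff 1)^[m] (fun x ↦ x.choose m : ℕ → ℤ) = fun _ ↦ 1 := by
    simpa using fwdDiff_iter_choose 0 m
  rw [show m + i + 1 = i + 1 + m by ring, Function.iterate_add_apply, iterate_m,
    Function.iterate_succ_apply, fwdDiff_const]
  exact Function.iterate_fixed (fwdDiff_const 1 0) i

theorem sum_neg_one_pow_mul_choose_mul_choose_add_eq_zero {m n : ℕ} (h : m < n) (y : ℕ) :
    ∑ j ∈ range (n + 1), (-1 : ℤ) ^ j * n.choose j * (y + j).choose m = 0 := by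
  have diff_eq_zero := congr_fun (fwdDiff_iter_choose_eq_zero_of_lt h) y
  rw [fwdDiff_iter_eq_sum_shift, Pi.zero_apply] at diff_eq_zero
  rw [← mul_zero ((-1) ^ n), ← diff_eq_zero, mul_sum]
  refine sum_congr rfl fun j hj ↦ ?_
  have sign : (-1 : ℤ) ^ j = (-1) ^ n * (-1) ^ (n - j) := by
    rw [← pow_add, neg_one_pow_congr]
    grind
  simp only [sign, smul_eq_mul, mul_one, mul_assoc]

theorem succ_mul_choose_mul_choose_succ (c d j : ℕ) :
    (d + 1) * ((d + 1).choose j * (c + (d + 1) + j).choose (d + 1)) =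
      (d + 1) * (d.choose j * (c + d + j).choose d) +
        (c + 2 * j) * ((d + 1).choose j * (c + d + j).choose d) := by
  have upper : (c + d + j + 1) * (c + d + j).choose d =
      (c + (d + 1) + j).choose (d + 1) * (d + 1) := by
    rw [Nat.add_one_mul_choose_eq]
    ring_nf
  have lower : (d + 1) * (d + 1).choose j = (d + 1) * d.choose j + j * (d + 1).choose j := by
    cases j with
    | zero => simp
    | succ i =>
      rw [mul_comm (i + 1), ← Nat.add_one_mul_choose_eq, Nat.choose_succ_succ]
      ring
  linear_combination (d + 1).choose j * upper.symm + (c + d + j).choose d * lower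

theorem cast_choose_mul_choose {K : Type*} [Semifield K] [CharZero K] {m d j : ℕ}
    (hjd : j ≤ d) (hdm : d ≤ m) :
    (d.choose j * m.choose d : K) = m ! / (j ! * (m - d)! * (d - j)!) := by
  have : (d ! : K) ≠ 0 := mod_cast d.factorial_ne_zero
  rw [Nat.cast_choose K hjd, Nat.cast_choose K hdm]
  field_simp

section Field

variable {K : Type*} [Field K] [CharZero K]

theorem sum_neg_one_pow_mul_choose_mul_choose_mul_div (c d : ℕ) (hc : c ≠ 0) :
    ∑ j ∈ range (d + 1),
      (-1 : K) ^ j * (d.choose j * (c + d + j).choose d) * (c / (c + 2 * j)) = 1 := by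
  induction d with
  | zero => simp [hc]
  | succ d ih =>
    have term_succ (j : ℕ) :
        (-1 : K) ^ j * ((d + 1).choose j * (c + (d + 1) + j).choose (d + 1)) * (c / (c + 2 * j)) =
          (-1) ^ j * (d.choose j * (c + d + j).choose d) * (c / (c + 2 * j)) +
            c / (d + 1) * ((-1) ^ j * (d + 1).choose j * (c + d + j).choose d) := by
      have recurrence := congrArg (Nat.cast (R := K)) (succ_mul_choose_mul_choose_succ c d j)
      push_cast at recurrence
      have : (c + 2 * j : K) ≠ 0 := by norm_cast; omega
      have : (d + 1 : K) ≠ 0 := by norm_cast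
      field_simp
      linear_combination recurrence
    have correction_eq_zero :
        ∑ j ∈ range (d + 2), (-1 : K) ^ j * (d + 1).choose j * (c + d + j).choose d = 0 := by
      exact_mod_cast congrArg (Int.cast (R := K))
        (sum_neg_one_pow_mul_choose_mul_choose_add_eq_zero d.lt_succ_self (c + d))
    rw [sum_congr rfl fun j _ ↦ term_succ j, sum_add_distrib, ← mul_sum, correction_eq_zero,
      mul_zero, add_zero, sum_range_succ, ih, Nat.choose_succ_self]
    simp

theorem sum_Icc_neg_one_pow_mul_factorial_div_eq_one {k N : ℕ} (hk : 1 ≤ k) (hkN : k ≤ N) :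
    ∑ n ∈ Icc k N, ((-1) ^ (n + k) * (2 * (k : K) - 1) /
      (((n - k)! : K) * ((k + n - 1)! : K) * (2 * (n : K) - 1))) *
        (((N + n - 1)! : K) / ((N - n)! : K)) = 1 := by
  refine Eq.trans ?_ (sum_neg_one_pow_mul_choose_mul_choose_mul_div (2 * k - 1) (N - k) (by omega))
  rw [← Ico_add_one_right_eq_Icc, sum_Ico_eq_sum_range, Nat.sub_add_comm hkN]
  refine sum_congr rfl fun j j_mem ↦ ?_
  have hj : j ≤ N - k := mem_range_succ_iff.mp j_mem
  have sign : (-1 : K) ^ (k + j + k) = (-1) ^ j := by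
    rw [neg_one_pow_congr]
    grind
  rw [cast_choose_mul_choose hj (by omega), sign,
    show 2 * k - 1 + (N - k) + j = N + (k + j) - 1 by omega,
    show N + (k + j) - 1 - (N - k) = k + (k + j) - 1 by omega,
    show N - k - j = N - (k + j) by omega, Nat.add_sub_cancel_left, Nat.cast_pred (by omega)]
  push_cast
  rw [show 2 * (k + j : K) - 1 = 2 * k - 1 + 2 * j by ring]
  simp only [div_eq_mul_inv, mul_inv]
  ring

theorem log_factorial_double_sum_general {E : Type*} [AddCommMonoid E] [Module K E] (f : ℕ → E)
    (N : ℕ) :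
    ∑ k ∈ Icc 1 N, f k =
      ∑ n ∈ Icc 1 N, ∑ k ∈ Icc 1 n,
        (((-1) ^ (n + k) * (2 * (k : K) - 1) /
            (((n - k)! : K) * ((k + n - 1)! : K) * (2 * (n : K) - 1))) *
          (((N + n - 1)! : K) / ((N - n)! : K))) • f k := by
  rw [sum_comm' (t' := Icc 1 N) (s' := fun k ↦ Icc k N) (by grind)]
  refine sum_congr rfl fun k hk ↦ ?_
  obtain ⟨one_le_k, k_le_N⟩ := mem_Icc.mp hk
  rw [← sum_smul, sum_Icc_neg_one_pow_mul_factorial_div_eq_one one_le_k k_le_N, one_smul]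

end Field

theorem log_factorial_eq_sum_log (N : ℕ) :
    Real.log (N ! : ℝ) = ∑ k ∈ Icc 1 N, Real.log (k : ℝ) := by
  rw [← prod_Ico_id_eq_factorial, Ico_add_one_right_eq_Icc, Nat.cast_prod, Real.log_prod]
  intro k hk
  exact Nat.cast_ne_zero.mpr (by grind)

theorem log_factorial_double_sum (N : ℕ) (hN : 1 ≤ N) :
    Real.log (Nat.factorial N : ℝ) =
      ∑ n ∈ Finset.Icc 1 N, ∑ k ∈ Finset.Icc 1 n,
        ((-1) ^ (n + k) * (2 * (k : ℝ) - 1) /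
            ((Nat.factorial (n - k) : ℝ) * (Nat.factorial (k + n - 1) : ℝ) *
              (2 * (n : ℝ) - 1))) *
          ((Nat.factorial (N + n - 1) : ℝ) / (Nat.factorial (N - n) : ℝ)) *
          Real.log (k : ℝ) :=
  (log_factorial_eq_sum_log N).trans
    (log_factorial_double_sum_general (K := ℝ) (fun k ↦ Real.log k) N)
end
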